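/- arXiv:2110.08755 — 3 statements merged into one kernel-verified Lean document; each statement's English description precedes it below -/
import Mathlib

section
/- Let n(t) := (cos t, sin t, 0) and fix κ² > 0. For C¹ 2π-periodic u : ℝ → ℝ³ define F(u) := ∫_{−π}^{π} |u'(t)|² dt + κ² ∫_{−π}^{π} |u(t) × n(t)|² dt. Consider the class of C¹ 2π-periodic u with |u(t)| = 1 for all t and ∫_{−π}^{π} (u₁(t), u₂(t)) dt = (0,0). Then in this class: (i) if 0 < κ² < 1, the only minimizers of F are the constants u ≡ (0,0,1) and u ≡ (0,0,−1), with minimal value 2πκ²; (ii) if κ² > 1, the only minimizers are u = n and u = −n, with minimal value 2π; (iii) if κ² = 1, the minimizers are exactly the maps u_θ(t) = (sin θ cos t, sin θ sin t, cos θ) for θ ∈ [−π, π], with common value 2π. -/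
open Real Set MeasureTheory

/-- Squared Euclidean norm of a vector in `ℝ³`. -/
noncomputable def sq3 (v : Fin 3 → ℝ) : ℝ := v 0 ^ 2 + v 1 ^ 2 + v 2 ^ 2

/-- The outward unit normal `n(t) = (cos t, sin t, 0)` to the unit circle. -/
noncomputable def nvec (t : ℝ) : Fin 3 → ℝ := ![Real.cos t, Real.sin t, 0]

/-- The reduced energy `F(u) = ∫ |u'|² + κ² ∫ |u × n|²` on the unit circle. -/
noncomputable def circE (κ : ℝ) (u : ℝ → Fin 3 → ℝ) : ℝ :=
  (∫ t in (-π)..π, sq3 (deriv u t))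
    + κ ^ 2 * ∫ t in (-π)..π, sq3 (crossProduct (u t) (nvec t))

/-- The admissible class: `C¹` `2π`-periodic unit-norm maps whose in-plane
component has zero average (weak axial symmetry). -/
def AdmWAS (u : ℝ → Fin 3 → ℝ) : Prop :=
  ContDiff ℝ 1 u ∧
  (∀ t : ℝ, u (t + 2 * π) = u t) ∧
  (∀ t : ℝ, sq3 (u t) = 1) ∧
  (∫ t in (-π)..π, u t 0) = 0 ∧ (∫ t in (-π)..π, u t 1) = 0

/-- `u` minimizes `F` in the weakly axially symmetric class. -/
def IsMinimizerWAS (κ : ℝ) (u : ℝ → Fin 3 → ℝ) : Prop :=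
  AdmWAS u ∧ ∀ v : ℝ → Fin 3 → ℝ, AdmWAS v → circE κ u ≤ circE κ v

/-- The axially symmetric configuration `u_θ(t) = (sin θ cos t, sin θ sin t, cos θ)`. -/
noncomputable def uax (θ t : ℝ) : Fin 3 → ℝ :=
  ![Real.sin θ * Real.cos t, Real.sin θ * Real.sin t, Real.cos θ]

theorem wirt (f f' : ℝ → ℝ) (hf : ∀ x, HasDerivAt f (f' x) x) (hf' : Continuous f')
    (hper : f π = f (-π)) (h0 : ∫ t in (-π)..π, f t = 0) :
    ∫ t in (-π)..π, f t ^ 2 ≤ ∫ t in (-π)..π, f' t ^ 2 := by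
  have hab : -π < π := by linarith [Real.pi_pos]
  have hc : Continuous f := continuous_iff_continuousAt.2 fun x => (hf x).continuousAt
  have hmem : ∀ g : ℝ → ℝ, Continuous g →
      MemLp (fun x => (g x : ℂ)) 2 (volume.restrict (Ioc (-π) π)) := by
    intro g hg
    have hg' : Continuous (fun x => (g x : ℂ)) := by fun_prop
    obtain ⟨C, hC⟩ := (isCompact_Icc (a := -π) (b := π)).exists_bound_of_continuousOn
      hg'.continuousOn
    refine MemLp.of_bound hg'.aestronglyMeasurable C ?_
    exact (ae_restrict_iff' measurableSet_Ioc).2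
      (ae_of_all _ fun x hx => hC x (Ioc_subset_Icc_self hx))
  have H1 := hasSum_sq_fourierCoeffOn hab (hmem f hc)
  have H2 := hasSum_sq_fourierCoeffOn hab (hmem f' hf')
  have hle : ∀ n : ℤ, ‖fourierCoeffOn hab (fun x => (f x : ℂ)) n‖ ^ 2 ≤
      ‖fourierCoeffOn hab (fun x => (f' x : ℂ)) n‖ ^ 2 := by
    intro n
    by_cases hn : n = 0
    · have : fourierCoeffOn hab (fun x => (f x : ℂ)) n = 0 := by
        rw [fourierCoeffOn_eq_integral, hn]
        simp only [neg_zero, fourier_zero, one_smul, intervalIntegral.integral_ofReal, h0]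
        simp
      rw [this]; simp
    · have h := fourierCoeffOn_of_hasDerivAt hab (n := n) (f := fun x => (f x : ℂ))
        (f' := fun x => (f' x : ℂ)) hn (fun x _ => (hf x).ofReal_comp)
        ((by fun_prop : Continuous (fun x => (f' x : ℂ))).intervalIntegrable _ _)
      rw [hper, sub_self, mul_zero, zero_sub] at h
      rw [h]
      have hn1 : (1 : ℝ) ≤ |(n : ℝ)| := by
        exact_mod_cast Int.one_le_abs hn
      have hpi : ((π : ℝ) : ℂ) ≠ 0 := by exact_mod_cast Real.pi_ne_zero
      have hnc : (n : ℂ) ≠ 0 := by exact_mod_cast hn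
      have e : 1 / (-2 * (π : ℂ) * Complex.I * n) * -(((π : ℝ) - (-π : ℝ) : ℂ) *
          fourierCoeffOn hab (fun x => (f' x : ℂ)) n)
          = (1 / (Complex.I * n)) * fourierCoeffOn hab (fun x => (f' x : ℂ)) n := by
        push_cast
        field_simp
        ring
      push_cast at e ⊢
      rw [e, norm_mul]
      gcongr
      refine mul_le_of_le_one_left (norm_nonneg _) ?_
      simp only [norm_div, norm_one, norm_mul, Complex.norm_I, one_mul, Complex.norm_intCast]
      rw [div_le_one (by linarith)]
      exact hn1
  have H := hasSum_le hle H1 H2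
  simp only [Complex.norm_real, Real.norm_eq_abs, sq_abs, smul_eq_mul] at H
  have : 0 < (π - -π)⁻¹ := by
    apply inv_pos.2; linarith
  exact le_of_mul_le_mul_left H this

theorem sq3_cross (v : Fin 3 → ℝ) (t : ℝ) :
    sq3 (crossProduct v (nvec t)) = v 2 ^ 2 + (v 0 * Real.sin t - v 1 * Real.cos t) ^ 2 := by
  simp only [sq3, nvec, cross_apply]
  simp
  linear_combination (v 2 ^ 2) * Real.sin_sq_add_cos_sq t

theorem hasDerivAt_uax (θ t : ℝ) : HasDerivAt (uax θ)
    ![-(Real.sin θ * Real.sin t), Real.sin θ * Real.cos t, 0] t := by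
  rw [hasDerivAt_pi]
  intro i
  fin_cases i
  · simpa [uax] using (Real.hasDerivAt_cos t).const_mul (Real.sin θ)
  · simpa [uax] using (Real.hasDerivAt_sin t).const_mul (Real.sin θ)
  · simpa [uax] using hasDerivAt_const t (Real.cos θ)

theorem adm_uax (θ : ℝ) : AdmWAS (uax θ) := by
  refine ⟨?_, ?_, ?_, ?_, ?_⟩
  · rw [contDiff_pi]
    intro i
    fin_cases i
    · simp [uax]; fun_prop
    · simp [uax]; fun_prop
    · simp [uax]; fun_prop
  · intro t; simp [uax]
  · intro t
    simp [sq3, uax]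
    linear_combination (Real.sin θ ^ 2) * Real.sin_sq_add_cos_sq t + Real.sin_sq_add_cos_sq θ
  · simp [uax]
  · simp [uax]

theorem circE_uax (κ θ : ℝ) :
    circE κ (uax θ) = 2 * π * (Real.sin θ ^ 2 + κ ^ 2 * Real.cos θ ^ 2) := by
  have h1 : ∀ t, sq3 (deriv (uax θ) t) = Real.sin θ ^ 2 := by
    intro t
    rw [(hasDerivAt_uax θ t).deriv]
    simp [sq3]
    linear_combination (Real.sin θ ^ 2) * Real.sin_sq_add_cos_sq t
  have h2 : ∀ t, sq3 (crossProduct (uax θ t) (nvec t)) = Real.cos θ ^ 2 := by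
    intro t
    rw [sq3_cross]
    simp [uax]
    ring
  simp only [circE, h1, h2, intervalIntegral.integral_const, smul_eq_mul]
  ring

theorem lower (κ : ℝ) (u : ℝ → Fin 3 → ℝ) (hu : AdmWAS u) :
    2 * π * min 1 (κ ^ 2) + ∫ t in (-π)..π, ((deriv u t 2) ^ 2
      + κ ^ 2 * (u t 0 * Real.sin t - u t 1 * Real.cos t) ^ 2) ≤ circE κ u := by
  obtain ⟨hC, hper, hnorm, h0, h1⟩ := hu
  have hd : ∀ t, HasDerivAt u (deriv u t) t := fun t =>
    (hC.differentiable (by norm_num) t).hasDerivAt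
  have hdi : ∀ i t, HasDerivAt (fun s => u s i) (deriv u t i) t := fun i t =>
    (hasDerivAt_pi.1 (hd t)) i
  have hcd : Continuous (deriv u) := hC.continuous_deriv (by norm_num)
  have hcdi : ∀ i, Continuous (fun t => deriv u t i) := fun i => by fun_prop
  have hcu : Continuous u := hC.continuous
  have hci : ∀ i, Continuous (fun t => u t i) := fun i => by fun_prop
  have hp : u π = u (-π) := by
    rw [← hper (-π)]; congr 1; ring
  have W0 := wirt _ _ (hdi 0) (hcdi 0) (by rw [hp]) h0
  have W1 := wirt _ _ (hdi 1) (hcdi 1) (by rw [hp]) h1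
  have c0 := hci 0
  have c1 := hci 1
  have c2 := hci 2
  have d0 := hcdi 0
  have d1 := hcdi 1
  have d2 := hcdi 2
  have hab : -π ≤ π := by linarith [Real.pi_pos]
  have I : ∀ f : ℝ → ℝ, Continuous f → IntervalIntegrable f volume (-π) π :=
    fun f hf => hf.intervalIntegrable _ _
  have e1 : ∫ t in (-π)..π, sq3 (deriv u t) = (∫ t in (-π)..π, deriv u t 0 ^ 2)
      + (∫ t in (-π)..π, deriv u t 1 ^ 2) + ∫ t in (-π)..π, deriv u t 2 ^ 2 := by
    simp only [sq3]
    rw [intervalIntegral.integral_add (I _ (by fun_prop)) (I _ (by fun_prop)),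
      intervalIntegral.integral_add (I _ (by fun_prop)) (I _ (by fun_prop))]
  have e2 : ∫ t in (-π)..π, sq3 (crossProduct (u t) (nvec t)) = (∫ t in (-π)..π, u t 2 ^ 2)
      + ∫ t in (-π)..π, (u t 0 * Real.sin t - u t 1 * Real.cos t) ^ 2 := by
    simp only [sq3_cross]
    rw [intervalIntegral.integral_add (I _ (by fun_prop)) (I _ (by fun_prop))]
  have e3 : ∫ t in (-π)..π, ((deriv u t 2) ^ 2
      + κ ^ 2 * (u t 0 * Real.sin t - u t 1 * Real.cos t) ^ 2) =
      (∫ t in (-π)..π, deriv u t 2 ^ 2) +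
      κ ^ 2 * ∫ t in (-π)..π, (u t 0 * Real.sin t - u t 1 * Real.cos t) ^ 2 := by
    rw [intervalIntegral.integral_add (I _ (by fun_prop)) (I _ (by fun_prop)),
      intervalIntegral.integral_const_mul]
  have e4 : 2 * π * min 1 (κ ^ 2) ≤ (∫ t in (-π)..π, u t 0 ^ 2) + (∫ t in (-π)..π, u t 1 ^ 2)
      + κ ^ 2 * ∫ t in (-π)..π, u t 2 ^ 2 := by
    rw [← intervalIntegral.integral_const_mul,
      ← intervalIntegral.integral_add (I _ (by fun_prop)) (I _ (by fun_prop)),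
      ← intervalIntegral.integral_add (I _ (by fun_prop)) (I _ (by fun_prop))]
    have : 2 * π * min 1 (κ ^ 2) = ∫ t in (-π)..π, min 1 (κ ^ 2) := by
      rw [intervalIntegral.integral_const, smul_eq_mul]; ring
    rw [this]
    refine intervalIntegral.integral_mono_on hab (I _ (by fun_prop)) (I _ (by fun_prop)) ?_
    intro t _
    have hn := hnorm t
    simp only [sq3] at hn
    have a1 := min_le_left 1 (κ ^ 2)
    have a2 := min_le_right 1 (κ ^ 2)
    have b1 := sq_nonneg (u t 0)
    have b2 := sq_nonneg (u t 1)
    have b3 := sq_nonneg (u t 2)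
    calc min 1 (κ ^ 2) = min 1 (κ ^ 2) * (u t 0 ^ 2 + u t 1 ^ 2) + min 1 (κ ^ 2) * u t 2 ^ 2 := by
          linear_combination (-min 1 (κ ^ 2)) * hn
      _ ≤ 1 * (u t 0 ^ 2 + u t 1 ^ 2) + κ ^ 2 * u t 2 ^ 2 := by gcongr
      _ = _ := by ring
  rw [e3, circE, e1, e2]
  linarith

theorem lower' (κ : ℝ) (u : ℝ → Fin 3 → ℝ) (hu : AdmWAS u) :
    2 * π * min 1 (κ ^ 2) ≤ circE κ u := by
  have := lower κ u hu
  have h : 0 ≤ ∫ t in (-π)..π, ((deriv u t 2) ^ 2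
      + κ ^ 2 * (u t 0 * Real.sin t - u t 1 * Real.cos t) ^ 2) :=
    intervalIntegral.integral_nonneg (by linarith [Real.pi_pos]) fun t _ => by positivity
  linarith

theorem rigid (κ : ℝ) (hκ : 0 < κ ^ 2) (u : ℝ → Fin 3 → ℝ) (hu : AdmWAS u)
    (hE : circE κ u ≤ 2 * π * min 1 (κ ^ 2)) : ∃ θ ∈ Icc (-π) π, ∀ t, u t = uax θ t := by
  have hl := lower κ u hu
  obtain ⟨hC, hper, hnorm, -, -⟩ := hu
  have hd : ∀ t, HasDerivAt u (deriv u t) t := fun t =>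
    (hC.differentiable (by norm_num) t).hasDerivAt
  have hdi : ∀ i t, HasDerivAt (fun s => u s i) (deriv u t i) t := fun i t =>
    (hasDerivAt_pi.1 (hd t)) i
  have hcd : Continuous (deriv u) := hC.continuous_deriv (by norm_num)
  have hcu : Continuous u := hC.continuous
  have hab : -π < π := by linarith [Real.pi_pos]
  set h : ℝ → ℝ := fun t => (deriv u t 2) ^ 2
      + κ ^ 2 * (u t 0 * Real.sin t - u t 1 * Real.cos t) ^ 2 with hh
  have hch : Continuous h := by fun_prop
  have hdper : ∀ t, deriv u (t + 2 * π) = deriv u t := by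
    intro t
    rw [← deriv_comp_add_const]
    congr 1
    funext s
    exact hper s
  have hhper : Function.Periodic h (2 * π) := by
    intro t
    simp only [hh, hdper, hper, Real.sin_add_two_pi, Real.cos_add_two_pi]
  have hnn : ∀ t, 0 ≤ h t := fun t => by simp only [hh]; positivity
  have hz : ∀ t, h t = 0 := by
    intro t
    obtain ⟨s, hs, hst⟩ := hhper.exists_mem_Ico (by positivity) t (-π)
    rw [hst]
    by_contra hne
    have hpos : 0 < ∫ t in (-π)..π, h t :=
      intervalIntegral.integral_pos hab hch.continuousOn (fun x _ => hnn x)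
        ⟨s, ⟨hs.1, by linarith [hs.2]⟩, lt_of_le_of_ne (hnn s) (Ne.symm hne)⟩
    linarith
  have hz1 : ∀ t, deriv u t 2 = 0 := by
    intro t
    have := hz t
    simp only [hh] at this
    have h2 : 0 ≤ κ ^ 2 * (u t 0 * Real.sin t - u t 1 * Real.cos t) ^ 2 := by positivity
    exact pow_eq_zero_iff (two_ne_zero) |>.1 (by linarith [sq_nonneg (deriv u t 2)])
  have hz2 : ∀ t, u t 0 * Real.sin t - u t 1 * Real.cos t = 0 := by
    intro t
    have := hz t
    simp only [hh, hz1] at this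
    simpa [hκ.ne', pow_eq_zero_iff] using this
  have hconst : ∀ t, u t 2 = u 0 2 := fun t =>
    is_const_of_deriv_eq_zero (f := fun s => u s 2) (fun t => (hdi 2 t).differentiableAt)
      (fun t => by rw [(hdi 2 t).deriv, hz1]) t 0
  set f : ℝ → ℝ := fun t => u t 0 * Real.cos t + u t 1 * Real.sin t with hf
  have hcf : Continuous f := by fun_prop
  have hu0 : ∀ t, u t 0 = f t * Real.cos t := fun t => by
    simp only [hf]
    linear_combination (-u t 0) * Real.sin_sq_add_cos_sq t + Real.sin t * hz2 t
  have hu1 : ∀ t, u t 1 = f t * Real.sin t := fun t => by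
    simp only [hf]
    linear_combination (-u t 1) * Real.sin_sq_add_cos_sq t - Real.cos t * hz2 t
  have hf2 : ∀ t, f t ^ 2 = 1 - u 0 2 ^ 2 := fun t => by
    have hn := hnorm t
    simp only [sq3, hu0, hu1, hconst t] at hn
    linear_combination hn - (f t ^ 2) * Real.sin_sq_add_cos_sq t
  have hfc : ∀ t, f t = f 0 := by
    intro t
    by_cases h0 : f 0 = 0
    · have := hf2 t
      rw [← hf2 0, h0] at this
      rw [h0]
      simpa using this
    · refine isPreconnected_univ.eq_of_sq_eq (f := f) (g := fun _ => f 0) hcf.continuousOn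
        continuousOn_const ?_ (fun _ => h0) (mem_univ 0) rfl (mem_univ t)
      intro s _
      simp only [Pi.pow_apply, hf2]
  have hsum := hf2 0
  refine ⟨Complex.arg ⟨u 0 2, f 0⟩, ⟨(Complex.neg_pi_lt_arg _).le, Complex.arg_le_pi _⟩, ?_⟩
  have hnrm : ‖(⟨u 0 2, f 0⟩ : ℂ)‖ = 1 := by
    rw [Complex.norm_def, Complex.normSq_mk, Real.sqrt_eq_one]
    linarith
  have hne : (⟨u 0 2, f 0⟩ : ℂ) ≠ 0 := by
    intro h; rw [h] at hnrm; simp at hnrm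
  intro t
  funext i
  simp only [uax, Complex.sin_arg, Complex.cos_arg hne, hnrm, div_one]
  fin_cases i
  · simpa [hfc t] using hu0 t
  · simpa [hfc t] using hu1 t
  · simpa using hconst t

theorem isMin_iff (κ : ℝ) (hκ : 0 < κ ^ 2) (u : ℝ → Fin 3 → ℝ) :
    IsMinimizerWAS κ u ↔ ∃ θ ∈ Icc (-π) π, (∀ t, u t = uax θ t) ∧
      Real.sin θ ^ 2 + κ ^ 2 * Real.cos θ ^ 2 = min 1 (κ ^ 2) := by
  constructor
  · rintro ⟨ha, hm⟩
    have hE : circE κ u ≤ 2 * π * min 1 (κ ^ 2) := by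
      rcases min_choice 1 (κ ^ 2) with h | h
      · have := hm _ (adm_uax (π / 2))
        rw [circE_uax] at this
        rw [h]; simpa using this
      · have := hm _ (adm_uax 0)
        rw [circE_uax] at this
        rw [h]; simpa using this
    obtain ⟨θ, hθ, hu⟩ := rigid κ hκ u ha hE
    refine ⟨θ, hθ, hu, ?_⟩
    have hl := lower' κ u ha
    have hEq := le_antisymm hE hl
    rw [show u = uax θ from funext hu, circE_uax] at hEq
    exact mul_left_cancel₀ (by positivity) hEq
  · rintro ⟨θ, -, hu, hs⟩
    rw [show u = uax θ from funext hu]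
    refine ⟨adm_uax θ, fun v hv => ?_⟩
    rw [circE_uax, hs]
    exact lower' κ v hv

theorem isMin_val (κ : ℝ) (hκ : 0 < κ ^ 2) (u : ℝ → Fin 3 → ℝ) (h : IsMinimizerWAS κ u) :
    circE κ u = 2 * π * min 1 (κ ^ 2) := by
  obtain ⟨θ, -, hu, hs⟩ := (isMin_iff κ hκ u).1 h
  rw [show u = uax θ from funext hu, circE_uax, hs]

/-- **Minimizers of the reduced energy in the weakly axially symmetric class**:
for `0 < κ² < 1` the only minimizers are `±e₃` (minimal value `2πκ²`); for
`κ² > 1` the only minimizers are `±n` (minimal value `2π`); for `κ² = 1` the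
minimizers are exactly the maps `u_θ`, `θ ∈ [−π,π]` (common value `2π`). -/
theorem reduced_energy_minimizers_WAS (κ : ℝ) (hκ : 0 < κ ^ 2) :
    (κ ^ 2 < 1 → ∀ u : ℝ → Fin 3 → ℝ,
      (IsMinimizerWAS κ u ↔
        ((∀ t : ℝ, u t = ![0, 0, 1]) ∨ (∀ t : ℝ, u t = ![0, 0, -1]))) ∧
      (IsMinimizerWAS κ u → circE κ u = 2 * π * κ ^ 2)) ∧
    (1 < κ ^ 2 → ∀ u : ℝ → Fin 3 → ℝ,
      (IsMinimizerWAS κ u ↔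
        ((∀ t : ℝ, u t = nvec t) ∨ (∀ t : ℝ, u t = -nvec t))) ∧
      (IsMinimizerWAS κ u → circE κ u = 2 * π)) ∧
    (κ ^ 2 = 1 → ∀ u : ℝ → Fin 3 → ℝ,
      (IsMinimizerWAS κ u ↔
        ∃ θ ∈ Icc (-π) π, ∀ t : ℝ, u t = uax θ t) ∧
      (IsMinimizerWAS κ u → circE κ u = 2 * π)) := by
  have hpi := Real.pi_pos
  refine ⟨fun hk u => ⟨?_, fun h => ?_⟩, fun hk u => ⟨?_, fun h => ?_⟩, fun hk u => ⟨?_, fun h => ?_⟩⟩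
  · rw [isMin_iff κ hκ, min_eq_right hk.le]
    constructor
    · rintro ⟨θ, -, hu, hs⟩
      have h1 := Real.sin_sq_add_cos_sq θ
      have hs0 : Real.sin θ = 0 := by
        have : (1 - κ ^ 2) * Real.sin θ ^ 2 = 0 := by linear_combination hs - κ ^ 2 * h1
        rcases mul_eq_zero.1 this with h | h
        · linarith
        · simpa using h
      rw [hs0] at h1
      have hc : Real.cos θ = 1 ∨ Real.cos θ = -1 :=
        (sq_eq_sq_iff_eq_or_eq_neg (b := (1:ℝ))).1 (by linarith)
      rcases hc with hc | hc
      · left; intro t; rw [hu]; simp [uax, hs0, hc]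
      · right; intro t; rw [hu]; simp [uax, hs0, hc]
    · rintro (hu | hu)
      · exact ⟨0, ⟨by linarith, hpi.le⟩, fun t => by rw [hu]; simp [uax], by simp⟩
      · exact ⟨π, ⟨by linarith, le_rfl⟩, fun t => by rw [hu]; simp [uax], by simp⟩
  · rw [isMin_val κ hκ u h, min_eq_right hk.le]
  · rw [isMin_iff κ hκ, min_eq_left hk.le]
    constructor
    · rintro ⟨θ, -, hu, hs⟩
      have h1 := Real.sin_sq_add_cos_sq θ
      have hs0 : Real.cos θ = 0 := by
        have : (κ ^ 2 - 1) * Real.cos θ ^ 2 = 0 := by linear_combination hs - h1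
        rcases mul_eq_zero.1 this with h | h
        · linarith
        · simpa using h
      rw [hs0] at h1
      have hc : Real.sin θ = 1 ∨ Real.sin θ = -1 := 
        (sq_eq_sq_iff_eq_or_eq_neg (b := (1:ℝ))).1 (by linarith)
      rcases hc with hc | hc
      · left; intro t; rw [hu]; simp [uax, nvec, hs0, hc]
      · right; intro t; rw [hu]; simp [uax, nvec, hs0, hc]
    · rintro (hu | hu)
      · exact ⟨π / 2, ⟨by linarith, by linarith⟩, fun t => by rw [hu]; simp [uax, nvec], by simp⟩
      · exact ⟨-(π / 2), ⟨by linarith, by linarith⟩, fun t => by rw [hu]; simp [uax, nvec], by simp⟩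
  · rw [isMin_val κ hκ u h, min_eq_left hk.le, mul_one]
  · rw [isMin_iff κ hκ, hk]
    constructor
    · rintro ⟨θ, hθ, hu, -⟩
      exact ⟨θ, hθ, hu⟩
    · rintro ⟨θ, hθ, hu⟩
      exact ⟨θ, hθ, hu, by simp⟩
  · rw [isMin_val κ hκ u h, hk, min_self, mul_one]
end

section
/- Let n(t) := (cos t, sin t, 0), τ(t) := (−sin t, cos t, 0), fix 0 < κ² < 3, set c_κ² := (κ² − √(κ⁴ + 16) + 4)/2 and φ_κ := (1/2) arctan(4/κ²). A C¹ 2π-periodic map u : ℝ → ℝ³ satisfies ∫_{−π}^{π} |u'(t)|² dt + κ² ∫_{−π}^{π} |u(t) × n(t)|² dt = c_κ² ∫_{−π}^{π} |u(t)|² dt with ∫_{−π}^{π} |u(t)|² dt = 2π if and only if there exists θ ∈ [−π, π] such that u(t) = √2 sin(φ_κ) cos(θ + t) τ(t) + √2 cos(φ_κ) sin(θ + t) n(t) for all t. -/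
open Real Set MeasureTheory

/-- The tangent field `τ(t) = (−sin t, cos t, 0)` to the unit circle. -/
noncomputable def tvec (t : ℝ) : Fin 3 → ℝ := ![-Real.sin t, Real.cos t, 0]


theorem wirt_aux (f f' : ℝ → ℝ) (hf : ∀ t, HasDerivAt f (f' t) t) (hc : Continuous f')
    (hp : f π = f (-π)) (hm : ∫ t in (-π)..π, f t = 0) :
    ∫ t in (-π)..π, f t ^ 2 ≤ ∫ t in (-π)..π, f' t ^ 2 := by
  have hab : -π < π := by linarith [Real.pi_pos]
  have hcf : Continuous f := continuous_iff_continuousAt.2 fun t => (hf t).continuousAt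
  have mem : ∀ g : ℝ → ℝ, Continuous g →
      MemLp (fun t => (g t : ℂ)) 2 (volume.restrict (Ioc (-π) π)) := by
    intro g hg
    have h1 : Continuous (fun t => (g t : ℂ)) := Complex.continuous_ofReal.comp hg
    obtain ⟨B, hB⟩ := (isCompact_Icc (a := -π) (b := π)).exists_bound_of_continuousOn h1.continuousOn
    refine MemLp.of_bound h1.aestronglyMeasurable B ?_
    filter_upwards [ae_restrict_mem measurableSet_Ioc] with x hx
    exact hB x ⟨hx.1.le, hx.2⟩
  have s1 := hasSum_sq_fourierCoeffOn hab (mem f hcf)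
  have s2 := hasSum_sq_fourierCoeffOn hab (mem f' hc)
  have key := hasSum_le (fun n => ?_) s1 s2
  · simp only [smul_eq_mul, Complex.norm_real, Real.norm_eq_abs, sq_abs] at key
    have : 0 < (π - -π)⁻¹ := inv_pos.2 (by linarith)
    exact le_of_mul_le_mul_left key this
  · by_cases hn : n = 0
    · subst hn
      have : fourierCoeffOn hab (fun t => (f t : ℂ)) 0 = 0 := by
        rw [fourierCoeffOn_eq_integral]
        simp [intervalIntegral.integral_ofReal, hm]
      rw [this]; simp
    · have h := fourierCoeffOn_of_hasDerivAt hab (f := fun t => (f t : ℂ))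
        (f' := fun t => (f' t : ℂ)) hn (fun x _ => (hf x).ofReal_comp)
        ((Complex.continuous_ofReal.comp hc).intervalIntegrable _ _)
      rw [hp, sub_self, mul_zero, zero_sub] at h
      have hpi : (π : ℂ) ≠ 0 := by exact_mod_cast Real.pi_ne_zero
      have hn' : (n : ℂ) ≠ 0 := by exact_mod_cast hn
      have h2 : fourierCoeffOn hab (fun t => (f' t : ℂ)) n
          = Complex.I * n * fourierCoeffOn hab (fun t => (f t : ℂ)) n := by
        rw [h]; push_cast; field_simp; ring
      rw [h2, norm_mul, norm_mul, Complex.norm_I, one_mul, mul_pow]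
      have : (1 : ℝ) ≤ ‖(n : ℂ)‖ ^ 2 := by
        rw [Complex.norm_intCast]
        have : (1 : ℝ) ≤ |(n : ℝ)| := by exact_mod_cast Int.one_le_abs hn
        nlinarith
      nlinarith [sq_nonneg ‖fourierCoeffOn hab (fun t => (f t : ℂ)) n‖]

theorem zero_aux (G : ℝ → ℝ) (hG : Continuous G) (h0 : ∀ t, 0 ≤ G t)
    (hi : ∫ t in (-π)..π, G t ≤ 0) : ∀ t ∈ Icc (-π) π, G t = 0 := by
  intro t ht
  by_contra hne
  have := intervalIntegral.integral_pos (by linarith [Real.pi_pos] : -π < π) hG.continuousOn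
    (fun x _ => h0 x) ⟨t, ht, lt_of_le_of_ne (h0 t) (Ne.symm hne)⟩
  linarith

theorem core_aux (T : ℝ) (hT1 : 1 / 2 < T) (hT2 : T < 1) (k c : ℝ) (hk : k = 2 / T - 2 * T)
    (hcc : c = 2 - 2 * T) (a b w a' b' w' : ℝ → ℝ)
    (ha : ∀ t, HasDerivAt a (a' t) t) (hb : ∀ t, HasDerivAt b (b' t) t)
    (hw : ∀ t, HasDerivAt w (w' t) t)
    (ca' : Continuous a') (cb' : Continuous b') (cw' : Continuous w')
    (pa : a π = a (-π)) (pb : b π = b (-π))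
    (H : ∫ t in (-π)..π, ((a' t + b t) ^ 2 + (b' t - a t) ^ 2 + w' t ^ 2
      + k * (a t ^ 2 + w t ^ 2) - c * (a t ^ 2 + b t ^ 2 + w t ^ 2)) = 0) :
    ∃ P R : ℝ, ∀ t ∈ Icc (-π) π, a t = P * cos t - R * sin t ∧
      T * b t = P * sin t + R * cos t ∧ w t = 0 := by
  have hT0 : 0 < T := by linarith
  have hpi := Real.pi_pos
  have ca : Continuous a := continuous_iff_continuousAt.2 fun t => (ha t).continuousAt
  have cb : Continuous b := continuous_iff_continuousAt.2 fun t => (hb t).continuousAt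
  have cw : Continuous w := continuous_iff_continuousAt.2 fun t => (hw t).continuousAt
  obtain ⟨a0, ha0⟩ : ∃ a0, ∫ t in (-π)..π, (a t - a0) = 0 := by
    refine ⟨(∫ t in (-π)..π, a t) / (2 * π), ?_⟩
    rw [intervalIntegral.integral_sub (ca.intervalIntegrable _ _) (by simp)]
    simp; field_simp; ring
  obtain ⟨b0, hb0⟩ : ∃ b0, ∫ t in (-π)..π, (b t - b0) = 0 := by
    refine ⟨(∫ t in (-π)..π, b t) / (2 * π), ?_⟩
    rw [intervalIntegral.integral_sub (cb.intervalIntegrable _ _) (by simp)]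
    simp; field_simp; ring
  have Wa := wirt_aux (fun t => a t - a0) a' (fun t => (ha t).sub_const a0) ca' (by simp [pa]) ha0
  have Wb := wirt_aux (fun t => b t - b0) b' (fun t => (hb t).sub_const b0) cb' (by simp [pb]) hb0
  obtain ⟨s, hs⟩ : ∃ s, s = 2 * T / (1 + T ^ 2) := ⟨_, rfl⟩
  have hs0 : 0 < s := by rw [hs]; positivity
  have hs1 : s < 1 := by rw [hs, div_lt_one (by positivity)]; nlinarith
  have hkc : 0 < k - c := by
    have : k - c = 2 * (1 - T) / T := by rw [hk, hcc]; field_simp; ring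
    rw [this]; exact div_pos (by linarith) hT0
  have hc1 : 0 < 1 - c := by linarith
  set G : ℝ → ℝ := fun t => s * (a' t + T * (b t - b0)) ^ 2 + s * (b' t - (a t - a0) / T) ^ 2
    + w' t ^ 2 + (k - c) * w t ^ 2 + (1 + k - c) * a0 ^ 2 + (1 - c) * b0 ^ 2 with hGdef
  have cG : Continuous G := by simp only [hGdef]; fun_prop
  have F0 : ∫ t in (-π)..π, (2 * (1 - T ^ 2) / (1 + T ^ 2) *
      (a' t * (b t - b0) + (a t - a0) * b' t) + 2 * b0 * a' t - 2 * a0 * b' t) = 0 := by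
    have := intervalIntegral.integral_eq_sub_of_hasDerivAt (a := -π) (b := π)
      (f := fun t => 2 * (1 - T ^ 2) / (1 + T ^ 2) *
        ((a t - a0) * (b t - b0)) + 2 * b0 * a t - 2 * a0 * b t)
      (fun t _ => ((((((ha t).sub_const a0).mul ((hb t).sub_const b0)).const_mul
        (2 * (1 - T ^ 2) / (1 + T ^ 2))).add ((ha t).const_mul (2 * b0))).sub
          ((hb t).const_mul (2 * a0))))
      (Continuous.intervalIntegrable (by fun_prop) _ _)
    rw [this, pa, pb]; ring
  have hG : ∫ t in (-π)..π, G t ≤ 0 := by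
    have e : ∀ t, (a' t + b t) ^ 2 + (b' t - a t) ^ 2 + w' t ^ 2
      + k * (a t ^ 2 + w t ^ 2) - c * (a t ^ 2 + b t ^ 2 + w t ^ 2) =
      G t + (1 - s) * (a' t ^ 2 - (a t - a0) ^ 2) + (1 - s) * (b' t ^ 2 - (b t - b0) ^ 2)
      + (2 * (1 - T ^ 2) / (1 + T ^ 2) *
      (a' t * (b t - b0) + (a t - a0) * b' t) + 2 * b0 * a' t - 2 * a0 * b' t)
      + 2 * (1 + k - c) * a0 * (a t - a0) + 2 * (1 - c) * b0 * (b t - b0) := by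
      intro t
      simp only [hGdef, hs, hk, hcc]
      field_simp
      ring
    simp only [e] at H
    have I : ∀ f : ℝ → ℝ, Continuous f → IntervalIntegrable f volume (-π) π :=
      fun f hf => hf.intervalIntegrable _ _
    rw [intervalIntegral.integral_add (I _ (by fun_prop)) (I _ (by fun_prop)),
      intervalIntegral.integral_add (I _ (by fun_prop)) (I _ (by fun_prop)),
      intervalIntegral.integral_add (I _ (by fun_prop)) (I _ (by fun_prop)),
      intervalIntegral.integral_add (I _ (by fun_prop)) (I _ (by fun_prop)),
      intervalIntegral.integral_add (I _ (by fun_prop)) (I _ (by fun_prop)), F0,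
      intervalIntegral.integral_const_mul, intervalIntegral.integral_const_mul,
      intervalIntegral.integral_const_mul, intervalIntegral.integral_const_mul, ha0, hb0,
      intervalIntegral.integral_sub (I _ (by fun_prop)) (I _ (by fun_prop)),
      intervalIntegral.integral_sub (I _ (by fun_prop)) (I _ (by fun_prop))] at H
    have h1 := mul_nonneg (by linarith : 0 ≤ 1 - s) (sub_nonneg.2 Wa)
    have h2 := mul_nonneg (by linarith : 0 ≤ 1 - s) (sub_nonneg.2 Wb)
    linarith
  have hkc' : 0 < 1 + k - c := by linarith
  have n1 : ∀ t, 0 ≤ s * (a' t + T * (b t - b0)) ^ 2 := fun t => by positivity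
  have n2 : ∀ t, 0 ≤ s * (b' t - (a t - a0) / T) ^ 2 := fun t => by positivity
  have n3 : ∀ t, 0 ≤ w' t ^ 2 := fun t => by positivity
  have n4 : ∀ t, 0 ≤ (k - c) * w t ^ 2 := fun t => by positivity
  have n5 : 0 ≤ (1 + k - c) * a0 ^ 2 := by positivity
  have n6 : 0 ≤ (1 - c) * b0 ^ 2 := by positivity
  have Z := zero_aux G cG (fun t => by
    simp only [hGdef]; linarith [n1 t, n2 t, n3 t, n4 t]) hG
  simp only [hGdef] at Z
  have sz : ∀ p x : ℝ, 0 < p → p * x ^ 2 ≤ 0 → x = 0 := by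
    intro p x hp hx
    have : x ^ 2 ≤ 0 := by
      by_contra h
      push Not at h
      linarith [mul_pos hp h]
    exact pow_eq_zero_iff (two_ne_zero) |>.1 (le_antisymm this (sq_nonneg x))
  have hmem : π ∈ Icc (-π) π := ⟨by linarith, le_rfl⟩
  have a00 : a0 = 0 := sz _ _ hkc' (by linarith [Z π hmem, n1 π, n2 π, n3 π, n4 π])
  have b00 : b0 = 0 := sz _ _ hc1 (by linarith [Z π hmem, n1 π, n2 π, n3 π, n4 π])
  have w0 : ∀ t ∈ Icc (-π) π, w t = 0 := fun t ht =>
    sz _ _ hkc (by linarith [Z t ht, n1 t, n2 t, n3 t, n4 t])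
  have o1 : ∀ t ∈ Icc (-π) π, a' t = - (T * b t) := fun t ht => by
    have := sz _ _ hs0 (by linarith [Z t ht, n1 t, n2 t, n3 t, n4 t] :
      s * (a' t + T * (b t - b0)) ^ 2 ≤ 0)
    rw [b00] at this; linarith
  have o2 : ∀ t ∈ Icc (-π) π, T * b' t = a t := fun t ht => by
    have := sz _ _ hs0 (by linarith [Z t ht, n1 t, n2 t, n3 t, n4 t] :
      s * (b' t - (a t - a0) / T) ^ 2 ≤ 0)
    rw [a00, sub_zero, sub_eq_zero] at this
    rw [this]; field_simp
  have cP := constant_of_has_deriv_right_zero (a := -π) (b := π)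
    (f := fun t => a t * cos t + T * b t * sin t) (by fun_prop) (fun t ht => by
      have h := ((ha t).mul (Real.hasDerivAt_cos t)).add
        (((hb t).const_mul T).mul (Real.hasDerivAt_sin t))
      have ht' : t ∈ Icc (-π) π := ⟨ht.1, ht.2.le⟩
      have h' := h.hasDerivWithinAt (s := Ici t)
      rw [o1 t ht', o2 t ht'] at h'
      exact h'.congr_deriv (by ring))
  have cR := constant_of_has_deriv_right_zero (a := -π) (b := π)
    (f := fun t => T * b t * cos t - a t * sin t) (by fun_prop) (fun t ht => by
      have h := (((hb t).const_mul T).mul (Real.hasDerivAt_cos t)).sub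
        ((ha t).mul (Real.hasDerivAt_sin t))
      have ht' : t ∈ Icc (-π) π := ⟨ht.1, ht.2.le⟩
      have h' := h.hasDerivWithinAt (s := Ici t)
      rw [o1 t ht', o2 t ht'] at h'
      exact h'.congr_deriv (by ring))
  refine ⟨a (-π) * cos (-π) + T * b (-π) * sin (-π), T * b (-π) * cos (-π) - a (-π) * sin (-π),
    fun t ht => ⟨?_, ?_, w0 t ht⟩⟩
  · have h1 := cP t ht
    have h2 := cR t ht
    try simp only at h1 h2
    rw [← h1, ← h2]
    linear_combination (-a t) * Real.sin_sq_add_cos_sq t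
  · have h1 := cP t ht
    have h2 := cR t ht
    try simp only at h1 h2
    rw [← h1, ← h2]
    linear_combination (-T * b t) * Real.sin_sq_add_cos_sq t

theorem par_aux (κ : ℝ) (hκ : 0 < κ ^ 2) (S C : ℝ) (hS : S = sin (arctan (4 / κ ^ 2) / 2))
    (hC : C = cos (arctan (4 / κ ^ 2) / 2)) : 0 < S ∧ S < C ∧ S ^ 2 + C ^ 2 = 1 ∧
    κ ^ 2 = 2 / (S / C) - 2 * (S / C) ∧
    (κ ^ 2 - Real.sqrt (κ ^ 4 + 16) + 4) / 2 = 2 - 2 * (S / C) := by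
  obtain ⟨ψ, hψ⟩ : ∃ ψ, ψ = arctan (4 / κ ^ 2) / 2 := ⟨_, rfl⟩
  rw [← hψ] at hS hC
  have h4 : 0 < 4 / κ ^ 2 := by positivity
  have h0 : 0 < arctan (4 / κ ^ 2) := Real.arctan_pos.2 h4
  have h1 := Real.arctan_lt_pi_div_two (4 / κ ^ 2)
  have ht : tan (2 * ψ) = 4 / κ ^ 2 := by
    rw [hψ, mul_div_cancel₀ _ (two_ne_zero), Real.tan_arctan]
  have hS0 : 0 < S := by rw [hS]; exact Real.sin_pos_of_pos_of_lt_pi (by linarith) (by linarith)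
  have hC0 : 0 < C := by rw [hC]; exact Real.cos_pos_of_mem_Ioo ⟨by linarith, by linarith⟩
  have h2c : 0 < cos (2 * ψ) := Real.cos_pos_of_mem_Ioo ⟨by linarith, by linarith⟩
  have hSC : S ^ 2 + C ^ 2 = 1 := by rw [hS, hC]; exact Real.sin_sq_add_cos_sq ψ
  have h2c' : cos (2 * ψ) = C ^ 2 - S ^ 2 := by rw [Real.cos_two_mul, hC.symm]; linarith
  have hlt : S < C := by
    rw [h2c'] at h2c
    nlinarith
  rw [Real.tan_eq_sin_div_cos, Real.sin_two_mul, ← hS, ← hC, h2c'] at ht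
  rw [h2c'] at h2c
  rw [div_eq_div_iff h2c.ne' hκ.ne'] at ht
  have hk : κ ^ 2 = 2 / (S / C) - 2 * (S / C) := by
    field_simp
    linarith
  refine ⟨hS0, hlt, hSC, hk, ?_⟩
  have hsq : κ ^ 4 + 16 = (2 / (S / C) + 2 * (S / C)) ^ 2 := by
    have : κ ^ 4 = (κ ^ 2) ^ 2 := by ring
    rw [this, hk]; field_simp; ring
  rw [hsq, Real.sqrt_sq (by positivity), hk]
  ring

theorem int_aux (P R : ℝ) :
    ∫ t in (-π)..π, (P * cos t - R * sin t) ^ 2 = π * (P ^ 2 + R ^ 2) := by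
  have := intervalIntegral.integral_eq_sub_of_hasDerivAt (a := -π) (b := π)
    (f := fun t => (P ^ 2 + R ^ 2) / 2 * t + (P ^ 2 - R ^ 2) / 2 * (sin t * cos t)
      + P * R * (cos t * cos t)) (f' := fun t => (P * cos t - R * sin t) ^ 2)
    (fun t _ => by
      have h := (((hasDerivAt_id t).const_mul ((P ^ 2 + R ^ 2) / 2)).add
        (((Real.hasDerivAt_sin t).mul (Real.hasDerivAt_cos t)).const_mul ((P ^ 2 - R ^ 2) / 2))).add
        (((Real.hasDerivAt_cos t).mul (Real.hasDerivAt_cos t)).const_mul (P * R))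
      refine h.congr_deriv ?_
      linear_combination (-(P ^ 2 + R ^ 2) / 2) * Real.sin_sq_add_cos_sq t)
    (Continuous.intervalIntegrable (by fun_prop) _ _)
  rw [this]; simp; ring

theorem sq3_frame (t : ℝ) (v : Fin 3 → ℝ) :
    sq3 v = (-sin t * v 0 + cos t * v 1) ^ 2 + (cos t * v 0 + sin t * v 1) ^ 2 + v 2 ^ 2 := by
  simp only [sq3]
  linear_combination (-(v 0 ^ 2 + v 1 ^ 2)) * Real.sin_sq_add_cos_sq t

theorem cross_frame (t : ℝ) (v : Fin 3 → ℝ) :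
    sq3 (crossProduct v (nvec t)) = (-sin t * v 0 + cos t * v 1) ^ 2 + v 2 ^ 2 := by
  simp only [sq3, nvec, cross_apply]
  simp
  linear_combination (v 2 ^ 2) * Real.sin_sq_add_cos_sq t

/-- **Equality case of the sharp Poincaré-type inequality for `0 < κ² < 3`**
(where `c_κ² = (κ² − √(κ⁴+16) + 4)/2`): a `C¹` `2π`-periodic `u` normalized by
`∫ |u|² = 2π` attains equality if and only if it belongs to the explicit
one-parameter family determined by `φ_κ = (1/2) arctan(4/κ²)`. -/
theorem poincare_equality_case_small_kappa
    (κ : ℝ) (hκ : 0 < κ ^ 2) (hκ3 : κ ^ 2 < 3)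
    (u : ℝ → Fin 3 → ℝ)
    (hu : ContDiff ℝ 1 u)
    (hper : ∀ t : ℝ, u (t + 2 * π) = u t) :
    (((∫ t in (-π)..π, sq3 (deriv u t))
        + κ ^ 2 * (∫ t in (-π)..π, sq3 (crossProduct (u t) (nvec t)))
        = (κ ^ 2 - Real.sqrt (κ ^ 4 + 16) + 4) / 2 * ∫ t in (-π)..π, sq3 (u t)) ∧
      (∫ t in (-π)..π, sq3 (u t)) = 2 * π) ↔
    (∃ θ ∈ Icc (-π) π, ∀ t : ℝ, u t =
        (Real.sqrt 2 * Real.sin (Real.arctan (4 / κ ^ 2) / 2) * Real.cos (θ + t)) • tvec t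
          + (Real.sqrt 2 * Real.cos (Real.arctan (4 / κ ^ 2) / 2) * Real.sin (θ + t)) • nvec t) := by
  obtain ⟨S, hS⟩ : ∃ S, S = sin (arctan (4 / κ ^ 2) / 2) := ⟨_, rfl⟩
  obtain ⟨C, hC⟩ : ∃ C, C = cos (arctan (4 / κ ^ 2) / 2) := ⟨_, rfl⟩
  obtain ⟨hS0, hlt, hSC, hk, hc⟩ := par_aux κ hκ S C hS hC
  rw [← hS, ← hC, hc]
  have hC0 : 0 < C := hS0.trans hlt
  have hpi := Real.pi_pos
  have h2 : Real.sqrt 2 ^ 2 = 2 := Real.sq_sqrt (by norm_num)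
  have hdu : ∀ t, HasDerivAt u (deriv u t) t :=
    fun t => (hu.differentiable (by norm_num) t).hasDerivAt
  have hd : ∀ i t, HasDerivAt (fun t => u t i) (deriv u t i) t :=
    fun i t => (hasDerivAt_pi.1 (hdu t)) i
  have cdu : Continuous (deriv u) := hu.continuous_deriv (by norm_num)
  have cd : ∀ i, Continuous (fun t => deriv u t i) := fun i => (continuous_apply i).comp cdu
  have cu : ∀ i, Continuous (fun t => u t i) := fun i => (continuous_apply i).comp hu.continuous
  have cd0 := cd 0
  have cd1 := cd 1
  have cd2 := cd 2
  have cu0 := cu 0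
  have cu1 := cu 1
  have cu2 := cu 2
  have I : ∀ f : ℝ → ℝ, Continuous f → IntervalIntegrable f volume (-π) π :=
      fun f hf => hf.intervalIntegrable _ _
  constructor
  · rintro ⟨hE, hN⟩
    have hupi : u π = u (-π) := by
      have := hper (-π)
      rw [← this]; congr 1; ring
    have hT1 : 1 / 2 < S / C := by
      by_contra h
      push Not at h
      have hTp : 0 < S / C := by positivity
      have : 4 ≤ 2 / (S / C) := by
        rw [le_div_iff₀ hTp]; linarith
      linarith
    have hT2 : S / C < 1 := (div_lt_one hC0).2 hlt
    obtain ⟨P, R, hPR⟩ := core_aux (S / C) hT1 hT2 (κ ^ 2) (2 - 2 * (S / C)) hk rfl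
      (fun t => -sin t * u t 0 + cos t * u t 1) (fun t => cos t * u t 0 + sin t * u t 1)
      (fun t => u t 2)
      (fun t => (-cos t * u t 0 + -sin t * deriv u t 0) + (-sin t * u t 1 + cos t * deriv u t 1))
      (fun t => (-sin t * u t 0 + cos t * deriv u t 0) + (cos t * u t 1 + sin t * deriv u t 1))
      (fun t => deriv u t 2)
      (fun t => ((Real.hasDerivAt_sin t).neg.mul (hd 0 t)).add
        ((Real.hasDerivAt_cos t).mul (hd 1 t)))
      (fun t => ((Real.hasDerivAt_cos t).mul (hd 0 t)).add
        ((Real.hasDerivAt_sin t).mul (hd 1 t)))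
      (hd 2) (by fun_prop) (by fun_prop) cd2 (by simp [hupi]) (by simp [hupi])
      (by
        have e : ∀ t, (((-cos t * u t 0 + -sin t * deriv u t 0) + (-sin t * u t 1 + cos t * deriv u t 1)) + (cos t * u t 0 + sin t * u t 1)) ^ 2 + (((-sin t * u t 0 + cos t * deriv u t 0) + (cos t * u t 1 + sin t * deriv u t 1)) - (-sin t * u t 0 + cos t * u t 1)) ^ 2 + deriv u t 2 ^ 2
            + κ ^ 2 * ((-sin t * u t 0 + cos t * u t 1) ^ 2 + u t 2 ^ 2)
            - (2 - 2 * (S / C)) * ((-sin t * u t 0 + cos t * u t 1) ^ 2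
              + (cos t * u t 0 + sin t * u t 1) ^ 2 + u t 2 ^ 2)
            = sq3 (deriv u t) + κ ^ 2 * sq3 (crossProduct (u t) (nvec t))
              - (2 - 2 * (S / C)) * sq3 (u t) := by
          intro t
          rw [sq3_frame t (deriv u t), sq3_frame t (u t), cross_frame]
          ring
        simp only [e]
        have c1 : Continuous fun t => sq3 (deriv u t) := by simp only [sq3]; fun_prop
        have c2 : Continuous fun t => sq3 (u t) := by simp only [sq3]; fun_prop
        have c3 : Continuous fun t => sq3 (crossProduct (u t) (nvec t)) := by
          simp only [cross_frame]; fun_prop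
        rw [intervalIntegral.integral_sub (I _ (by fun_prop)) (I _ (by fun_prop)),
          intervalIntegral.integral_add (I _ (by fun_prop)) (I _ (by fun_prop)),
          intervalIntegral.integral_const_mul, intervalIntegral.integral_const_mul, hE, sub_self])
    have hPR2 : P ^ 2 + R ^ 2 = 2 * S ^ 2 := by
      have : ∫ t in (-π)..π, sq3 (u t) = ∫ t in (-π)..π, ((P * cos t - R * sin t) ^ 2 +
          (C / S) ^ 2 * (R * cos t - (-P) * sin t) ^ 2) := by
        apply intervalIntegral.integral_congr
        intro t ht
        rw [uIcc_of_le (by linarith)] at ht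
        obtain ⟨h1, h2, h3⟩ := hPR t ht
        simp only at h1 h2 h3 ⊢
        have h2' : cos t * u t 0 + sin t * u t 1 = (C / S) * (R * cos t - (-P) * sin t) := by
          field_simp at h2 ⊢
          linarith
        rw [sq3_frame t, h1, h2', h3]
        ring
      rw [hN, intervalIntegral.integral_add (I _ (by fun_prop)) (I _ (by fun_prop)),
        intervalIntegral.integral_const_mul, int_aux, int_aux] at this
      have h3 : 2 = (P ^ 2 + R ^ 2) * (1 + (C / S) ^ 2) := by
        apply mul_left_cancel₀ hpi.ne'
        linarith
      field_simp at h3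
      rw [hSC] at h3
      linarith
    obtain ⟨z, hz⟩ : ∃ z : ℂ, z = ⟨P, R⟩ := ⟨_, rfl⟩
    have hnz : ‖z‖ = Real.sqrt 2 * S := by
      rw [Complex.norm_def, Complex.normSq_apply, hz]
      have : P * P + R * R = (Real.sqrt 2 * S) ^ 2 := by rw [mul_pow, h2]; linarith
      simp only [this]
      exact Real.sqrt_sq (by positivity)
    have hP : P = Real.sqrt 2 * S * cos z.arg := by
      rw [← hnz, Complex.norm_mul_cos_arg, hz]
    have hR : R = Real.sqrt 2 * S * sin z.arg := by
      rw [← hnz, Complex.norm_mul_sin_arg, hz]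
    refine ⟨z.arg, ⟨(Complex.neg_pi_lt_arg z).le, Complex.arg_le_pi z⟩, ?_⟩
    have main : ∀ t ∈ Icc (-π) π, u t =
        (Real.sqrt 2 * S * cos (z.arg + t)) • tvec t
          + (Real.sqrt 2 * C * sin (z.arg + t)) • nvec t := by
      intro t ht
      obtain ⟨h1, h2, h3⟩ := hPR t ht
      try simp only at h1 h2 h3
      have e1 : -sin t * u t 0 + cos t * u t 1 = Real.sqrt 2 * S * cos (z.arg + t) := by
        rw [h1, hP, hR, Real.cos_add]; ring
      have e2 : cos t * u t 0 + sin t * u t 1 = Real.sqrt 2 * C * sin (z.arg + t) := by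
        rw [hP, hR] at h2
        rw [Real.sin_add]
        field_simp at h2
        linarith
      rw [← e1, ← e2]
      ext i
      fin_cases i
      · simp [tvec, nvec]
        linear_combination (-u t 0) * Real.sin_sq_add_cos_sq t
      · simp [tvec, nvec]
        linear_combination (-u t 1) * Real.sin_sq_add_cos_sq t
      · simp [tvec, nvec, h3]
    intro t
    have hp1 : Function.Periodic u (2 * π) := hper
    have hp2 : Function.Periodic (fun t => (Real.sqrt 2 * S * cos (z.arg + t)) • tvec t
          + (Real.sqrt 2 * C * sin (z.arg + t)) • nvec t) (2 * π) := by
      intro t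
      simp only [tvec, nvec, ← add_assoc, Real.cos_add_two_pi, Real.sin_add_two_pi]
    have hp : Function.Periodic (fun t => u t - ((Real.sqrt 2 * S * cos (z.arg + t)) • tvec t
          + (Real.sqrt 2 * C * sin (z.arg + t)) • nvec t)) (2 * π) := hp1.sub hp2
    obtain ⟨y, hy, hty⟩ := hp.exists_mem_Ico (by linarith) t (-π)
    have hy' : y ∈ Icc (-π) π := ⟨hy.1, by linarith [hy.2]⟩
    try simp only at hty
    rw [main y hy', sub_self] at hty
    exact sub_eq_zero.1 hty
  · rintro ⟨θ, -, hform⟩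
    obtain ⟨A, hA⟩ : ∃ A, A = Real.sqrt 2 * S := ⟨_, rfl⟩
    obtain ⟨B, hB⟩ : ∃ B, B = Real.sqrt 2 * C := ⟨_, rfl⟩
    have hA2 : A ^ 2 = 2 * S ^ 2 := by rw [hA, mul_pow, h2]
    have hB2 : B ^ 2 = 2 * C ^ 2 := by rw [hB, mul_pow, h2]
    have hAB : A * B = 2 * S * C := by rw [hA, hB]; linear_combination S * C * h2
    rw [← hA, ← hB] at hform
    have f0 : ∀ t, u t 0 = A * cos (θ + t) * (-sin t) + B * sin (θ + t) * cos t := by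
      intro t; rw [hform t]; simp [tvec, nvec]
    have f1 : ∀ t, u t 1 = A * cos (θ + t) * cos t + B * sin (θ + t) * sin t := by
      intro t; rw [hform t]; simp [tvec, nvec]
    have f2 : ∀ t, u t 2 = 0 := by
      intro t; rw [hform t]; simp [tvec, nvec]
    have dc : ∀ t, HasDerivAt (fun t => cos (θ + t)) (-sin (θ + t)) t := fun t => by
      simpa using (Real.hasDerivAt_cos (θ + t)).comp_const_add θ t
    have ds : ∀ t, HasDerivAt (fun t => sin (θ + t)) (cos (θ + t)) t := fun t => by
      simpa using (Real.hasDerivAt_sin (θ + t)).comp_const_add θ t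
    have g0 : ∀ t, deriv u t 0 = (B - A) * (cos (θ + t) * cos t - sin (θ + t) * sin t) := by
      intro t
      have h := (((dc t).const_mul A).mul (Real.hasDerivAt_sin t).neg).add
        (((ds t).const_mul B).mul (Real.hasDerivAt_cos t))
      have h' := hd 0 t
      simp only [f0] at h'
      rw [h'.unique h]
      simp only [Pi.neg_apply]
      ring
    have g1 : ∀ t, deriv u t 1 = (B - A) * (cos (θ + t) * sin t + sin (θ + t) * cos t) := by
      intro t
      have h := (((dc t).const_mul A).mul (Real.hasDerivAt_cos t)).add
        (((ds t).const_mul B).mul (Real.hasDerivAt_sin t))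
      have h' := hd 1 t
      simp only [f1] at h'
      rw [h'.unique h]
      ring
    have g2 : ∀ t, deriv u t 2 = 0 := by
      intro t
      have h' := hd 2 t
      simp only [f2] at h'
      exact h'.unique (hasDerivAt_const t 0)
    have q1 : ∀ t, sq3 (deriv u t) = (B - A) ^ 2 := by
      intro t
      simp only [sq3, g0, g1, g2]
      linear_combination ((B - A) ^ 2 * (sin t ^ 2 + cos t ^ 2)) * Real.sin_sq_add_cos_sq (θ + t)
        + (B - A) ^ 2 * Real.sin_sq_add_cos_sq t
    have k1 : ∀ t, -sin t * u t 0 + cos t * u t 1 = A * (cos θ * cos t - sin θ * sin t) := by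
      intro t
      rw [← Real.cos_add, f0, f1]
      linear_combination (A * cos (θ + t)) * Real.sin_sq_add_cos_sq t
    have k2 : ∀ t, cos t * u t 0 + sin t * u t 1 = B * (sin θ * cos t - (-cos θ) * sin t) := by
      intro t
      have : sin θ * cos t - (-cos θ) * sin t = sin (θ + t) := by rw [Real.sin_add]; ring
      rw [this, f0, f1]
      linear_combination (B * sin (θ + t)) * Real.sin_sq_add_cos_sq t
    have i1 : ∫ t in (-π)..π, sq3 (deriv u t) = 2 * π * (B - A) ^ 2 := by
      simp only [q1]; rw [intervalIntegral.integral_const, smul_eq_mul]; ring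
    have i2 : ∫ t in (-π)..π, sq3 (crossProduct (u t) (nvec t)) = π * A ^ 2 := by
      simp only [cross_frame, k1, f2, mul_pow]
      rw [intervalIntegral.integral_add (I _ (by fun_prop)) (I _ (by fun_prop)),
        intervalIntegral.integral_const_mul, int_aux, Real.cos_sq_add_sin_sq]
      simp; ring
    have i3 : ∫ t in (-π)..π, sq3 (u t) = 2 * π := by
      have : ∀ t, sq3 (u t) = A ^ 2 * (cos θ * cos t - sin θ * sin t) ^ 2
          + B ^ 2 * (sin θ * cos t - (-cos θ) * sin t) ^ 2 := by
        intro t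
        rw [sq3_frame t, k1, k2, f2]; ring
      simp only [this]
      rw [intervalIntegral.integral_add (I _ (by fun_prop)) (I _ (by fun_prop)),
        intervalIntegral.integral_const_mul, intervalIntegral.integral_const_mul,
        int_aux, int_aux, neg_sq, Real.cos_sq_add_sin_sq, Real.sin_sq_add_cos_sq, hA2, hB2]
      linear_combination 2 * π * hSC
    refine ⟨?_, i3⟩
    rw [i1, i2, i3, hA2, hk]
    have : (B - A) ^ 2 = 2 - 4 * S * C := by
      linear_combination hA2 + hB2 - 2 * hAB + 2 * hSC
    rw [this]
    field_simp
    have hC2 : C ^ 2 = 1 - S ^ 2 := by linarith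
    ring_nf
    grind
end

section
/- Let n(t) := (cos t, sin t, 0) and suppose κ² ≥ 3. Consider C¹ maps m : [−1,1] × ℝ → ℝ³ with |m(z,t)| = 1 for all (z,t) and m(z, t+2π) = m(z,t), and the energy E(m) := ∫_{−1}^{1} ∫_{−π}^{π} ( |∂_z m|² + |∂_t m|² + κ² |m(z,t) × n(t)|² ) dt dz. Then E(m) ≥ 4π for every such m, with equality if and only if m(z,t) = n(t) for all (z,t) or m(z,t) = −n(t) for all (z,t); i.e., the normal vector fields ±n are the only global minimizers of E. -/
open Real Set MeasureTheory

/-- The micromagnetic energy on the circular cylinder `[−1,1] × S¹`. -/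
noncomputable def cylEnergy (κ : ℝ) (m : ℝ → ℝ → Fin 3 → ℝ) : ℝ :=
  ∫ z in (-1 : ℝ)..1, ∫ t in (-π)..π,
    (sq3 (deriv (fun w => m w t) z) + sq3 (deriv (fun s => m z s) t)
      + κ ^ 2 * sq3 (crossProduct (m z t) (nvec t)))


lemma aux_cubic (u : ℝ) (h0 : 0 ≤ u) (h1 : u ≤ 1) :
    1 ≤ 2 - u * (4 - 19 * u / 3 + 16 * u ^ 2 / 9) := by
  nlinarith [mul_nonneg h0 (sq_nonneg (u - 2/5)), mul_nonneg h0 (sub_nonneg.2 h1), sq_nonneg (u - 2/5)]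

lemma aux_identity (K a b c p q r : ℝ) (h1 : a ^ 2 + b ^ 2 + c ^ 2 = 1)
    (h2 : a * p + b * q + c * r = 0) :
    p ^ 2 + q ^ 2 + r ^ 2 + K * (b ^ 2 + c ^ 2) - 1
      + 2 * ((p + b) * (-b + b ^ 3 / 3) + (q - a) * (-a + a * b ^ 2))
    = ((p + b) + (-2 * b + b ^ 3 / 3) - (-2 * a * b + 4 / 3 * a * b ^ 3) * a) ^ 2
      + ((q - a) + a * b ^ 2 - (-2 * a * b + 4 / 3 * a * b ^ 3) * b) ^ 2
      + (r - (-2 * a * b + 4 / 3 * a * b ^ 3) * c) ^ 2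
      + (K - 3) * (b ^ 2 + c ^ 2)
      + b ^ 2 * (16 / 9 * (b ^ 2 - 3 / 4) ^ 2 * (3 - b ^ 2))
      + c ^ 2 * (2 - b ^ 2 * (4 - 19 * b ^ 2 / 3 + 16 * (b ^ 2) ^ 2 / 9)) := by
  linear_combination (1 - (-2 * a * b + 4 / 3 * a * b ^ 3) ^ 2 - b ^ 2 * (-4 + 19 * b ^ 2 / 3 - 16 * b ^ 4 / 9)) * h1 + 2 * (-2 * a * b + 4 / 3 * a * b ^ 3) * h2

lemma aux_nonneg (K a b c p q r : ℝ) (hK : 3 ≤ K) (h1 : a ^ 2 + b ^ 2 + c ^ 2 = 1)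
    (h2 : a * p + b * q + c * r = 0) :
    0 ≤ p ^ 2 + q ^ 2 + r ^ 2 + K * (b ^ 2 + c ^ 2) - 1
      + 2 * ((p + b) * (-b + b ^ 3 / 3) + (q - a) * (-a + a * b ^ 2)) := by
  rw [aux_identity K a b c p q r h1 h2]
  have hb : b ^ 2 ≤ 1 := by nlinarith
  have := aux_cubic (b ^ 2) (sq_nonneg b) hb
  have e1 : 0 ≤ K - 3 := by linarith
  have e2 : 0 ≤ 3 - b ^ 2 := by linarith
  have e3 : 0 ≤ 2 - b ^ 2 * (4 - 19 * b ^ 2 / 3 + 16 * (b ^ 2) ^ 2 / 9) := by linarith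
  positivity

lemma aux_zero (K a b c p q r : ℝ) (hK : 3 ≤ K) (h1 : a ^ 2 + b ^ 2 + c ^ 2 = 1)
    (h2 : a * p + b * q + c * r = 0)
    (h : p ^ 2 + q ^ 2 + r ^ 2 + K * (b ^ 2 + c ^ 2) - 1
      + 2 * ((p + b) * (-b + b ^ 3 / 3) + (q - a) * (-a + a * b ^ 2)) = 0) :
    c = 0 ∧ (b = 0 ∨ b ^ 2 = 3 / 4) := by
  rw [aux_identity K a b c p q r h1 h2] at h
  have hb : b ^ 2 ≤ 1 := by nlinarith
  have := aux_cubic (b ^ 2) (sq_nonneg b) hb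
  have e1 : 0 ≤ (K - 3) * (b ^ 2 + c ^ 2) := mul_nonneg (by linarith) (by positivity)
  have e2 : 2 * (b * (b ^ 2 - 3 / 4)) ^ 2 ≤ b ^ 2 * (16 / 9 * (b ^ 2 - 3 / 4) ^ 2 * (3 - b ^ 2)) := by
    nlinarith [mul_nonneg (sq_nonneg (b * (b ^ 2 - 3 / 4))) (sub_nonneg.2 hb)]
  have e3 : c ^ 2 ≤ c ^ 2 * (2 - b ^ 2 * (4 - 19 * b ^ 2 / 3 + 16 * (b ^ 2) ^ 2 / 9)) :=
    le_mul_of_one_le_right (sq_nonneg c) this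
  have s1 := sq_nonneg ((p + b) + (-2 * b + b ^ 3 / 3) - (-2 * a * b + 4 / 3 * a * b ^ 3) * a)
  have s2 := sq_nonneg ((q - a) + a * b ^ 2 - (-2 * a * b + 4 / 3 * a * b ^ 3) * b)
  have s3 := sq_nonneg (r - (-2 * a * b + 4 / 3 * a * b ^ 3) * c)
  have s4 := sq_nonneg (b * (b ^ 2 - 3 / 4))
  have s5 := sq_nonneg c
  have hc : c ^ 2 = 0 := by linarith
  have hbb : (b * (b ^ 2 - 3 / 4)) ^ 2 = 0 := by linarith
  refine ⟨by simpa using hc, ?_⟩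
  rcases mul_eq_zero.1 (pow_eq_zero_iff (two_ne_zero) |>.1 hbb) with h | h
  · exact Or.inl h
  · exact Or.inr (by linarith)

lemma aux_int_zero (f : ℝ → ℝ) (x y : ℝ) (hxy : x < y) (hf : Continuous f)
    (h0 : ∀ s, 0 ≤ f s) (hi : ∫ s in x..y, f s = 0) : ∀ s ∈ Icc x y, f s = 0 := by
  intro s hs
  by_contra hne
  have : 0 < ∫ s in x..y, f s :=
    intervalIntegral.integral_pos hxy hf.continuousOn (fun s _ => h0 s)
      ⟨s, hs, lt_of_le_of_ne (h0 s) (Ne.symm hne)⟩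
  linarith

/-- The pieces on a line of constant `z`. -/
lemma aux_line (f g h f' g' h' : ℝ → ℝ) (hf : ∀ t, HasDerivAt f (f' t) t)
    (hg : ∀ t, HasDerivAt g (g' t) t) (hh : ∀ t, HasDerivAt h (h' t) t)
    (hu : ∀ t, f t ^ 2 + g t ^ 2 + h t ^ 2 = 1) (t : ℝ) :
    HasDerivAt (fun t => f t * cos t + g t * sin t)
      ((f' t * cos t + g' t * sin t) + (-f t * sin t + g t * cos t)) t ∧
    HasDerivAt (fun t => -f t * sin t + g t * cos t)
      ((-f' t * sin t + g' t * cos t) - (f t * cos t + g t * sin t)) t ∧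
    (f t * cos t + g t * sin t) ^ 2 + (-f t * sin t + g t * cos t) ^ 2 + h t ^ 2 = 1 ∧
    (f t * cos t + g t * sin t) * (f' t * cos t + g' t * sin t)
      + (-f t * sin t + g t * cos t) * (-f' t * sin t + g' t * cos t) + h t * h' t = 0 := by
  have hsc := sin_sq_add_cos_sq t
  refine ⟨?_, ?_, ?_, ?_⟩
  · exact (((hf t).mul (hasDerivAt_cos t)).add ((hg t).mul (hasDerivAt_sin t))).congr_deriv
      (by ring)
  · exact (((hf t).neg.mul (hasDerivAt_sin t)).add ((hg t).mul (hasDerivAt_cos t))).congr_deriv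
      (by simp only [Pi.neg_apply]; ring)
  · linear_combination (f t ^ 2 + g t ^ 2) * hsc + hu t
  · have d := (((hf t).pow 2).add ((hg t).pow 2)).add ((hh t).pow 2)
    have d2 : HasDerivAt (fun _ : ℝ => (1 : ℝ)) 0 t := hasDerivAt_const t 1
    have e : (f ^ 2 + g ^ 2 + h ^ 2) = fun _ : ℝ => (1 : ℝ) := by
      funext s; simpa using hu s
    rw [e] at d
    have := d.unique d2
    simp at this
    linear_combination (f t * f' t + g t * g' t) * hsc + this / 2

lemma aux_F (a b : ℝ → ℝ) (a' b' t : ℝ) (ha : HasDerivAt a a' t) (hb : HasDerivAt b b' t) :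
    HasDerivAt (fun s => -(a s * b s) + a s * b s ^ 3 / 3)
      (a' * (-b t + b t ^ 3 / 3) + b' * (-a t + a t * b t ^ 2)) t := by
  refine (((ha.mul hb).neg).add ((ha.mul (hb.pow 3)).div_const 3)).congr_deriv ?_
  simp
  ring

/-- If the pointwise equality conditions hold near `t`, the field is normal at `t`. -/
lemma aux_rigid (K : ℝ) (hK : 3 ≤ K) (a b c p q r : ℝ → ℝ) (t : ℝ) (s : Set ℝ) (hs : s ∈ nhds t)
    (ha : HasDerivAt a (p t + b t) t) (hb : HasDerivAt b (q t - a t) t)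
    (hc : HasDerivAt c (r t) t)
    (h1 : ∀ x, a x ^ 2 + b x ^ 2 + c x ^ 2 = 1)
    (h2 : ∀ x, a x * p x + b x * q x + c x * r x = 0)
    (h : ∀ x ∈ s, p x ^ 2 + q x ^ 2 + r x ^ 2 + K * (b x ^ 2 + c x ^ 2) - 1
      + 2 * ((p x + b x) * (-b x + b x ^ 3 / 3) + (q x - a x) * (-a x + a x * b x ^ 2)) = 0) :
    a t ^ 2 = 1 := by
  have key : ∀ x ∈ s, c x = 0 ∧ (b x = 0 ∨ b x ^ 2 = 3 / 4) := fun x hx =>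
    aux_zero K _ _ _ _ _ _ hK (h1 x) (h2 x) (h x hx)
  have ht := mem_of_mem_nhds hs
  have hc0 : r t = 0 := by
    have e : c =ᶠ[nhds t] fun _ => 0 := by
      filter_upwards [hs] with x hx using (key x hx).1
    exact hc.unique ((hasDerivAt_const t (0:ℝ)).congr_of_eventuallyEq e)
  have hb0 : q t - a t = 0 := by
    have e : (fun x => b x ^ 3 - 3 / 4 * b x) =ᶠ[nhds t] fun _ => 0 := by
      filter_upwards [hs] with x hx
      rcases (key x hx).2 with h | h
      · simp [h]
      · linear_combination b x * h
    have := ((hb.pow 3).sub (hb.const_mul (3/4))).unique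
      ((hasDerivAt_const t (0:ℝ)).congr_of_eventuallyEq e)
    simp at this
    rcases (key t ht).2 with h | h
    · rw [h] at this
      linarith
    · rw [h] at this
      linarith
  have ct := (key t ht).1
  have ha0 : a t * (p t + b t) = 0 := by
    have := h2 t
    rw [hc0] at this
    linear_combination this - b t * hb0
  have hat : a t ≠ 0 := by
    intro h0
    have := h1 t
    rw [h0, ct] at this
    rcases (key t ht).2 with h | h <;> rw [h] at this <;> norm_num at this
  have ha1 : p t + b t = 0 := by simpa [hat] using ha0
  have hp : p t = - b t := by linarith
  have hq : q t = a t := by linarith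
  have := h t ht
  rw [hp, hq, hc0, ct] at this
  have h1t := h1 t
  rw [ct] at h1t
  have hb2 : b t ^ 2 = 0 := by nlinarith [sq_nonneg (b t)]
  nlinarith

/-- **Micromagnetic ground states in thin cylindrical shells for `κ² ≥ 3`**:
`E(m) ≥ 4π` for every `C¹` unit-norm `2π`-periodic-in-`t` map `m`, with equality
if and only if `m = n` or `m = −n`; i.e., the normal vector fields `±n` are the
only global minimizers. -/
theorem normal_fields_only_global_minimizers
    (κ : ℝ) (hκ : 3 ≤ κ ^ 2)
    (m : ℝ → ℝ → Fin 3 → ℝ)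
    (hsm : ContDiff ℝ 1 (fun p : ℝ × ℝ => m p.1 p.2))
    (hunit : ∀ z t : ℝ, sq3 (m z t) = 1)
    (hper : ∀ z t : ℝ, m z (t + 2 * π) = m z t) :
    4 * π ≤ cylEnergy κ m ∧
    (cylEnergy κ m = 4 * π ↔
      ((∀ z ∈ Icc (-1 : ℝ) 1, ∀ t : ℝ, m z t = nvec t) ∨
       (∀ z ∈ Icc (-1 : ℝ) 1, ∀ t : ℝ, m z t = -nvec t))) := by
  set M : ℝ × ℝ → Fin 3 → ℝ := fun p => m p.1 p.2 with hM
  have hdiff : Differentiable ℝ M := hsm.differentiable (by norm_num)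
  set A : ℝ → ℝ → Fin 3 → ℝ := fun z t => fderiv ℝ M (z, t) (1, 0) with hA
  set B : ℝ → ℝ → Fin 3 → ℝ := fun z t => fderiv ℝ M (z, t) (0, 1) with hB
  have hcf : Continuous (fderiv ℝ M) := hsm.continuous_fderiv (by norm_num)
  have hMc : Continuous (fun p : ℝ × ℝ => m p.1 p.2) := hsm.continuous
  have hAc : Continuous (fun p : ℝ × ℝ => A p.1 p.2) := by
    simp only [hA, Prod.mk.eta]; fun_prop
  have hBc : Continuous (fun p : ℝ × ℝ => B p.1 p.2) := by
    simp only [hB, Prod.mk.eta]; fun_prop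
  have hdA : ∀ z t, HasDerivAt (fun w => m w t) (A z t) z := fun z t =>
    HasFDerivAt.comp_hasDerivAt (l := M) (f := fun w : ℝ => (w, t)) z
      (by simpa using (hdiff (z, t)).hasFDerivAt)
      ((hasDerivAt_id z).prodMk (hasDerivAt_const z t))
  have hdB : ∀ z t, HasDerivAt (fun s => m z s) (B z t) t := fun z t =>
    HasFDerivAt.comp_hasDerivAt (l := M) (f := fun s : ℝ => (z, s)) t
      (by simpa using (hdiff (z, t)).hasFDerivAt)
      ((hasDerivAt_const t z).prodMk (hasDerivAt_id t))
  have hdBi : ∀ z i t, HasDerivAt (fun s => m z s i) (B z t i) t := fun z i t =>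
    hasDerivAt_pi.1 (hdB z t) i
  have hMi : ∀ i, Continuous (fun p : ℝ × ℝ => m p.1 p.2 i) := fun i => (continuous_apply i).comp hMc
  have hAi : ∀ i, Continuous (fun p : ℝ × ℝ => A p.1 p.2 i) := fun i => (continuous_apply i).comp hAc
  have hBi : ∀ i, Continuous (fun p : ℝ × ℝ => B p.1 p.2 i) := fun i => (continuous_apply i).comp hBc
  clear_value A B
  -- frame components
  set a : ℝ → ℝ → ℝ := fun z t => m z t 0 * cos t + m z t 1 * sin t with ha
  set b : ℝ → ℝ → ℝ := fun z t => -m z t 0 * sin t + m z t 1 * cos t with hb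
  set p : ℝ → ℝ → ℝ := fun z t => B z t 0 * cos t + B z t 1 * sin t with hp
  set q : ℝ → ℝ → ℝ := fun z t => -B z t 0 * sin t + B z t 1 * cos t with hq
  have hline : ∀ z t, HasDerivAt (a z) (p z t + b z t) t ∧ HasDerivAt (b z) (q z t - a z t) t ∧
      a z t ^ 2 + b z t ^ 2 + m z t 2 ^ 2 = 1 ∧
      a z t * p z t + b z t * q z t + m z t 2 * B z t 2 = 0 := fun z t =>
    aux_line (fun t => m z t 0) (fun t => m z t 1) (fun t => m z t 2)
      (fun t => B z t 0) (fun t => B z t 1) (fun t => B z t 2)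
      (hdBi z 0) (hdBi z 1) (hdBi z 2) (fun t => hunit z t) t
  have hac : Continuous (fun x : ℝ × ℝ => a x.1 x.2) := by
    have := hMi 0; have := hMi 1; simp only [ha]; fun_prop
  have hbc : Continuous (fun x : ℝ × ℝ => b x.1 x.2) := by
    have := hMi 0; have := hMi 1; simp only [hb]; fun_prop
  have hpc : Continuous (fun x : ℝ × ℝ => p x.1 x.2) := by
    have := hBi 0; have := hBi 1; simp only [hp]; fun_prop
  have hqc : Continuous (fun x : ℝ × ℝ => q x.1 x.2) := by
    have := hBi 0; have := hBi 1; simp only [hq]; fun_prop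
  have hcc := hMi 2
  have hrc := hBi 2
  have haper : ∀ z, Function.Periodic (a z) (2 * π) := fun z t => by
    simp only [ha, hper, cos_add_two_pi, sin_add_two_pi]
  have hbper : ∀ z, Function.Periodic (b z) (2 * π) := fun z t => by
    simp only [hb, hper, cos_add_two_pi, sin_add_two_pi]
  -- the energy density in the frame
  have hdens : ∀ z t, sq3 (deriv (fun w => m w t) z) + sq3 (deriv (fun s => m z s) t)
      + κ ^ 2 * sq3 (crossProduct (m z t) (nvec t)) =
      sq3 (A z t) + (p z t ^ 2 + q z t ^ 2 + B z t 2 ^ 2 + κ ^ 2 * (b z t ^ 2 + m z t 2 ^ 2)) := by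
    intro z t
    rw [(hdA z t).deriv, (hdB z t).deriv]
    have hsc := sin_sq_add_cos_sq t
    simp [sq3, nvec, crossProduct, ha, hb, hp, hq]
    linear_combination (-(B z t 0 ^ 2 + B z t 1 ^ 2) + κ ^ 2 * m z t 2 ^ 2) * hsc
  clear_value p q
  set G : ℝ → ℝ → ℝ := fun z t => 2 * ((p z t + b z t) * (-b z t + b z t ^ 3 / 3)
      + (q z t - a z t) * (-a z t + a z t * b z t ^ 2)) with hG
  set D : ℝ → ℝ → ℝ := fun z t => p z t ^ 2 + q z t ^ 2 + B z t 2 ^ 2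
      + κ ^ 2 * (b z t ^ 2 + m z t 2 ^ 2) - 1 + G z t with hD
  set H : ℝ → ℝ → ℝ := fun z t => sq3 (A z t) + D z t with hH
  have hGc : Continuous (fun x : ℝ × ℝ => G x.1 x.2) := by simp only [hG]; fun_prop
  have hDc : Continuous (fun x : ℝ × ℝ => D x.1 x.2) := by simp only [hD]; fun_prop
  have hHc : Continuous (fun x : ℝ × ℝ => H x.1 x.2) := by
    have := hAi 0; have := hAi 1; have := hAi 2
    simp only [hH, sq3]; fun_prop
  have hsq : ∀ v, 0 ≤ sq3 v := fun v => by unfold sq3; positivity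
  have hD0 : ∀ z t, 0 ≤ D z t := fun z t =>
    aux_nonneg (κ ^ 2) _ _ _ _ _ _ hκ (hline z t).2.2.1 (hline z t).2.2.2
  have hH0 : ∀ z t, 0 ≤ H z t := fun z t => add_nonneg (hsq _) (hD0 z t)
  have hGz : ∀ z, Continuous (G z) := fun z => hGc.comp (by fun_prop : Continuous fun t : ℝ => (z, t))
  have hHz : ∀ z, Continuous (H z) := fun z => hHc.comp (by fun_prop : Continuous fun t : ℝ => (z, t))
  have hGint : ∀ z, ∫ t in (-π)..π, G z t = 0 := by
    intro z
    have hd : ∀ t ∈ uIcc (-π) π, HasDerivAt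
        (fun s => 2 * (-(a z s * b z s) + a z s * b z s ^ 3 / 3)) (G z t) t := fun t _ =>
      (aux_F (a z) (b z) _ _ t (hline z t).1 (hline z t).2.1).const_mul 2
    rw [intervalIntegral.integral_eq_sub_of_hasDerivAt hd ((hGz z).intervalIntegrable _ _)]
    have e : π = -π + 2 * π := by ring
    have e1 : a z π = a z (-π) := by conv_lhs => rw [e]
                                     exact haper z _
    have e2 : b z π = b z (-π) := by conv_lhs => rw [e]
                                     exact hbper z _
    rw [e1, e2, sub_self]
  have hJc : Continuous (fun z => ∫ t in (-π)..π, H z t) :=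
    intervalIntegral.continuous_parametric_intervalIntegral_of_continuous' hHc _ _
  have hE : cylEnergy κ m = (∫ z in (-1 : ℝ)..1, ∫ t in (-π)..π, H z t) + 4 * π := by
    have inner : ∀ z, (∫ t in (-π)..π,
        (sq3 (deriv (fun w => m w t) z) + sq3 (deriv (fun s => m z s) t)
        + κ ^ 2 * sq3 (crossProduct (m z t) (nvec t)))) = (∫ t in (-π)..π, H z t) + 2 * π := by
      intro z
      have e : ∀ t, (sq3 (deriv (fun w => m w t) z) + sq3 (deriv (fun s => m z s) t)
        + κ ^ 2 * sq3 (crossProduct (m z t) (nvec t))) = (H z t + 1) - G z t := by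
        intro t
        rw [hdens]
        simp only [hH, hD]
        ring
      simp only [e]
      rw [intervalIntegral.integral_sub, intervalIntegral.integral_add, hGint]
      · simp; ring
      · exact (hHz z).intervalIntegrable _ _
      · exact continuous_const.intervalIntegrable _ _
      · exact ((hHz z).add continuous_const).intervalIntegrable _ _
      · exact (hGz z).intervalIntegrable _ _
    unfold cylEnergy
    simp only [inner]
    rw [intervalIntegral.integral_add (hJc.intervalIntegrable _ _)
      (continuous_const.intervalIntegrable _ _)]
    simp; ring
  have hpi : -π < π := by linarith [pi_pos]
  have hJ0 : ∀ z, 0 ≤ ∫ t in (-π)..π, H z t := fun z =>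
    intervalIntegral.integral_nonneg hpi.le (fun t _ => hH0 z t)
  refine ⟨?_, ?_, ?_⟩
  · rw [hE]
    have := intervalIntegral.integral_nonneg (μ := volume) (show (-1 : ℝ) ≤ 1 by norm_num)
      (fun z _ => hJ0 z)
    linarith
  · intro heq
    have hz : (∫ z in (-1 : ℝ)..1, ∫ t in (-π)..π, H z t) = 0 := by linarith
    have hJ := aux_int_zero _ _ _ (by norm_num) hJc hJ0 hz
    have hHv : ∀ z ∈ Icc (-1 : ℝ) 1, ∀ t ∈ Icc (-π) π, H z t = 0 := fun z hz =>
      aux_int_zero _ _ _ hpi (hHz z) (hH0 z) (hJ z hz)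
    have hDv : ∀ z ∈ Icc (-1 : ℝ) 1, ∀ t ∈ Icc (-π) π, D z t = 0 := fun z hz t ht => by
      have h1 := hHv z hz t ht
      have h2 := hsq (A z t)
      have h3 := hD0 z t
      simp only [hH] at h1
      linarith
    have hIoo : ∀ z ∈ Icc (-1 : ℝ) 1, ∀ t ∈ Ioo (-π) π, a z t ^ 2 = 1 := fun z hz t ht =>
      aux_rigid (κ ^ 2) hκ (a z) (b z) (fun t => m z t 2) (p z) (q z) (fun t => B z t 2) t
        (Ioo (-π) π) (Ioo_mem_nhds ht.1 ht.2) (hline z t).1 (hline z t).2.1 (hdBi z 2 t)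
        (fun x => (hline z x).2.2.1) (fun x => (hline z x).2.2.2)
        (fun x hx => hDv z hz x (Ioo_subset_Icc_self hx))
    have hIcc : ∀ z ∈ Icc (-1 : ℝ) 1, ∀ t ∈ Icc (-π) π, a z t ^ 2 = 1 := by
      intro z hz t ht
      have hcl : IsClosed {t | a z t ^ 2 = 1} := by
        have : Continuous (a z) := hac.comp (by fun_prop : Continuous fun t : ℝ => (z, t))
        exact isClosed_eq (by fun_prop) continuous_const
      have := closure_minimal (fun t ht => hIoo z hz t ht : Ioo (-π) π ⊆ {t | a z t ^ 2 = 1}) hcl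
      rw [closure_Ioo hpi.ne] at this
      exact this ht
    have hall : ∀ z ∈ Icc (-1 : ℝ) 1, ∀ t, a z t ^ 2 = 1 := by
      intro z hz t
      obtain ⟨y, hy, e⟩ := (haper z).exists_mem_Ico (by positivity) t (-π)
      rw [e]
      exact hIcc z hz y ⟨hy.1, by linarith [hy.2]⟩
    have hb0 : ∀ z ∈ Icc (-1 : ℝ) 1, ∀ t, b z t = 0 ∧ m z t 2 = 0 := by
      intro z hz t
      have h1 := hall z hz t
      have h2 := (hline z t).2.2.1
      constructor
      · have : b z t ^ 2 = 0 := by nlinarith [sq_nonneg (b z t), sq_nonneg (m z t 2)]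
        simpa using this
      · have : m z t 2 ^ 2 = 0 := by nlinarith [sq_nonneg (b z t), sq_nonneg (m z t 2)]
        simpa using this
    have hrec : ∀ z ∈ Icc (-1 : ℝ) 1, ∀ t, m z t = a z t • nvec t := by
      intro z hz t
      obtain ⟨h1, h2⟩ := hb0 z hz t
      have hsc := sin_sq_add_cos_sq t
      simp only [hb] at h1
      funext i
      fin_cases i
      · simp [nvec, ha]
        linear_combination -sin t * h1 - m z t 0 * hsc
      · simp [nvec, ha]
        linear_combination cos t * h1 - m z t 1 * hsc
      · simpa [nvec] using h2
    have hpre : IsPreconnected (Icc (-1 : ℝ) 1 ×ˢ (univ : Set ℝ)) :=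
      isPreconnected_Icc.prod isPreconnected_univ
    have hconst : ∀ z ∈ Icc (-1 : ℝ) 1, ∀ t, a z t = a 0 0 := by
      intro z hz t
      have hfin : ({1, -1} : Set ℝ).Finite := by simp
      exact hpre.constant_of_mapsTo (T := ({1, -1} : Set ℝ)) (f := fun x : ℝ × ℝ => a x.1 x.2)
        hfin.isDiscrete hac.continuousOn
        (fun x hx => by
          have := hall x.1 hx.1 x.2
          simpa using (fun {x : ℝ} (h : x ^ 2 = 1) => (by simpa using h : x = 1 ∨ x = -1)) this)
        (x := (z, t)) (y := (0, 0)) ⟨hz, mem_univ _⟩ ⟨by norm_num, mem_univ _⟩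
    rcases (fun {x : ℝ} (h : x ^ 2 = 1) => (by simpa using h : x = 1 ∨ x = -1)) (hall 0 (by norm_num) 0) with h | h
    · left
      intro z hz t
      rw [hrec z hz t, hconst z hz t, h, one_smul]
    · right
      intro z hz t
      rw [hrec z hz t, hconst z hz t, h, neg_one_smul]
  · intro hor
    obtain ⟨e, he, hme⟩ : ∃ e : ℝ, e ^ 2 = 1 ∧ ∀ z ∈ Icc (-1 : ℝ) 1, ∀ t, m z t = e • nvec t := by
      rcases hor with h | h
      · exact ⟨1, by norm_num, fun z hz t => by rw [h z hz t, one_smul]⟩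
      · exact ⟨-1, by norm_num, fun z hz t => by rw [h z hz t, neg_one_smul]⟩
    have hval : ∀ z ∈ Ioo (-1 : ℝ) 1, ∀ t, (sq3 (deriv (fun w => m w t) z)
        + sq3 (deriv (fun s => m z s) t) + κ ^ 2 * sq3 (crossProduct (m z t) (nvec t))) = 1 := by
      intro z hz t
      have hsc := sin_sq_add_cos_sq t
      have d1 : deriv (fun w => m w t) z = 0 := by
        have : (fun w => m w t) =ᶠ[nhds z] fun _ => e • nvec t := by
          filter_upwards [Ioo_mem_nhds hz.1 hz.2] with w hw
          exact hme w (Ioo_subset_Icc_self hw) t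
        rw [this.deriv_eq, deriv_const]
      have d2 : deriv (fun s => m z s) t = ![e * -sin t, e * cos t, 0] := by
        have : (fun s => m z s) = fun s => ![e * cos s, e * sin s, 0] := by
          funext s i
          rw [hme z (Ioo_subset_Icc_self hz) s]
          fin_cases i <;> simp [nvec]
        rw [this]
        apply HasDerivAt.deriv
        rw [hasDerivAt_pi]
        intro i
        fin_cases i
        · exact (hasDerivAt_cos t).const_mul e
        · exact (hasDerivAt_sin t).const_mul e
        · exact hasDerivAt_const t 0
      rw [d1, d2, hme z (Ioo_subset_Icc_self hz) t]
      simp [sq3, nvec, crossProduct]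
      linear_combination e ^ 2 * hsc + he
    unfold cylEnergy
    rw [intervalIntegral.integral_of_le (by norm_num), integral_Ioc_eq_integral_Ioo,
      setIntegral_congr_fun (g := fun _ => 2 * π) measurableSet_Ioo]
    · simp; ring
    · intro z hz
      simp only [hval z hz]
      simp; ring
end
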